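/- Let X be a locally compact, Hausdorff, second countable, totally disconnected topological space, let n ≥ 1, and let p, q ∈ C₀(X, Mₙ(ℂ)) be projections (p = p* = p² and q = q* = q², with operations pointwise). Then p and q are Murray–von Neumann equivalent, i.e. there exists v ∈ C₀(X, Mₙ(ℂ)) with v* v = p and v v* = q, if and only if trace(p(x)) = trace(q(x)) for every x ∈ X. -/

import Mathlib

section Helpers

open scoped Matrix.Norms.L2Operator MatrixOrder ComplexOrder Matrix Topology

/-- Idempotent matrices with equal traces are algebraically equivalent. -/
theorem aux_alg_equiv {n : ℕ} (P Q : Matrix (Fin n) (Fin n) ℂ) (hP : P * P = P)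
    (hQ : Q * Q = Q) (h : P.trace = Q.trace) :
    ∃ a b : Matrix (Fin n) (Fin n) ℂ, b * a = P ∧ Q * a * P = a := by
  have key : ∀ R : Matrix (Fin n) (Fin n) ℂ, R * R = R →
      LinearMap.IsProj (LinearMap.range (Matrix.toLin' R)) (Matrix.toLin' R) := by
    intro R hR
    apply LinearMap.IsIdempotentElem.isProj_range
    unfold IsIdempotentElem
    rw [Module.End.mul_eq_comp, ← Matrix.toLin'_mul, hR]
  have tr : ∀ R : Matrix (Fin n) (Fin n) ℂ, R * R = R →
      R.trace = (Module.finrank ℂ (LinearMap.range (Matrix.toLin' R)) : ℂ) := by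
    intro R hR
    rw [← (key R hR).trace, Matrix.trace_toLin'_eq]
  have hf : Module.finrank ℂ (LinearMap.range (Matrix.toLin' P)) =
      Module.finrank ℂ (LinearMap.range (Matrix.toLin' Q)) := by
    have := tr P hP
    rw [h, tr Q hQ] at this
    exact_mod_cast this.symm
  let e := LinearEquiv.ofFinrankEq _ _ hf
  let fa : (Fin n → ℂ) →ₗ[ℂ] (Fin n → ℂ) :=
    (LinearMap.range (Matrix.toLin' Q)).subtype ∘ₗ e.toLinearMap ∘ₗ
      (Matrix.toLin' P).rangeRestrict
  let fb : (Fin n → ℂ) →ₗ[ℂ] (Fin n → ℂ) :=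
    (LinearMap.range (Matrix.toLin' P)).subtype ∘ₗ e.symm.toLinearMap ∘ₗ
      (Matrix.toLin' Q).rangeRestrict
  have hrr : ∀ y : LinearMap.range (Matrix.toLin' Q),
      (Matrix.toLin' Q).rangeRestrict y = y := by
    intro y
    apply Subtype.ext
    exact (key Q hQ).map_id y y.2
  have hrp : ∀ y, (Matrix.toLin' P).rangeRestrict (Matrix.toLin' P y) =
      (Matrix.toLin' P).rangeRestrict y := by
    intro y
    apply Subtype.ext
    exact (key P hP).map_id _ ⟨y, rfl⟩
  refine ⟨LinearMap.toMatrix' fa, LinearMap.toMatrix' fb, ?_, ?_⟩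
  · apply Matrix.toLin'.injective
    rw [Matrix.toLin'_mul, Matrix.toLin'_toMatrix', Matrix.toLin'_toMatrix']
    apply LinearMap.ext
    intro y
    simp only [fa, fb, LinearMap.comp_apply, Submodule.subtype_apply, hrr]
    simp
  · apply Matrix.toLin'.injective
    rw [Matrix.toLin'_mul, Matrix.toLin'_mul, Matrix.toLin'_toMatrix']
    apply LinearMap.ext
    intro y
    simp only [fa, LinearMap.comp_apply, Submodule.subtype_apply, hrp]
    exact (key Q hQ).map_id _ (Subtype.property _)

theorem aux_unit {n : ℕ} (P a b : Matrix (Fin n) (Fin n) ℂ) (hP : P * P = P)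
    (hPs : star P = P) (hba : b * a = P) :
    IsUnit (star a * a + (1 - P)) := by
  rw [← Matrix.mulVec_injective_iff_isUnit]
  have hs : star (1 - P) * (1 - P) = 1 - P := by
    rw [star_sub, star_one, hPs, sub_mul, mul_sub, mul_sub, hP]; simp
  have : ∀ y, (star a * a + (1 - P)) *ᵥ y = 0 → y = 0 := by
    intro y hy
    have h1 : star y ⬝ᵥ ((star a * a + (1 - P)) *ᵥ y) = 0 := by rw [hy]; simp
    rw [← hs] at h1
    have h2 : ∀ c : Matrix (Fin n) (Fin n) ℂ,
        star y ⬝ᵥ ((star c * c) *ᵥ y) = star (c *ᵥ y) ⬝ᵥ (c *ᵥ y) := by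
      intro c
      rw [← Matrix.mulVec_mulVec, Matrix.dotProduct_mulVec, Matrix.star_mulVec]
      rfl
    rw [Matrix.add_mulVec, dotProduct_add, h2, h2] at h1
    have h3 := (add_eq_zero_iff_of_nonneg (dotProduct_star_self_nonneg (a *ᵥ y))
      (dotProduct_star_self_nonneg ((1 - P) *ᵥ y))).1 h1
    have h4 := dotProduct_star_self_eq_zero.1 h3.1
    have h5 := dotProduct_star_self_eq_zero.1 h3.2
    rw [Matrix.sub_mulVec, Matrix.one_mulVec, sub_eq_zero, ← hba, ← Matrix.mulVec_mulVec, h4,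
      Matrix.mulVec_zero] at h5
    exact h5
  intro y z hyz
  rw [← sub_eq_zero]
  apply this
  rw [Matrix.mulVec_sub]
  exact sub_eq_zero.2 hyz

/-- Pointwise algebra: the polar part of `w = Q c P`. -/
theorem aux_polar {n : ℕ} (P Q w s : Matrix (Fin n) (Fin n) ℂ) (hP : P * P = P)
    (hQ : Q * Q = Q) (hPs : star P = P) (hQs : star Q = Q) (htr : P.trace = Q.trace)
    (hwP : w * P = w) (hQw : Q * w = w)
    (hss : s * s = star w * w + (1 - P)) (hs : star s = s) (hsP : Commute s P)
    (hu : IsUnit s) :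
    star (w * s⁻¹) * (w * s⁻¹) = P ∧ (w * s⁻¹) * star (w * s⁻¹) = Q := by
  have hd : IsUnit s.det := (Matrix.isUnit_iff_isUnit_det s).1 hu
  have h1 : s * s⁻¹ = 1 := Matrix.mul_nonsing_inv s hd
  have h2 : s⁻¹ * s = 1 := Matrix.nonsing_inv_mul s hd
  have hPw : P * star w = star w := by
    conv_rhs => rw [← hwP, star_mul, hPs]
  have hsi : star s⁻¹ = s⁻¹ := by
    rw [Matrix.star_eq_conjTranspose, Matrix.conjTranspose_nonsing_inv,
      ← Matrix.star_eq_conjTranspose, hs]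
  have hc : s⁻¹ * P = P * s⁻¹ := by
    calc s⁻¹ * P = s⁻¹ * (P * s) * s⁻¹ := by
          rw [mul_assoc, mul_assoc, h1, mul_one]
      _ = s⁻¹ * (s * P) * s⁻¹ := by rw [hsP.eq]
      _ = P * s⁻¹ := by rw [← mul_assoc, h2, one_mul]
  have hww : star w * w = s * s * P := by
    rw [hss, add_mul, mul_assoc, hwP, sub_mul, hP]; simp
  have hv1 : star (w * s⁻¹) * (w * s⁻¹) = P := by
    calc star (w * s⁻¹) * (w * s⁻¹) = s⁻¹ * (star w * w) * s⁻¹ := by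
          rw [star_mul, hsi]; simp only [mul_assoc]
      _ = (s⁻¹ * s) * s * (P * s⁻¹) := by rw [hww]; simp only [mul_assoc]
      _ = P := by rw [h2, one_mul, ← hc, ← mul_assoc, h1, one_mul]
  refine ⟨hv1, ?_⟩
  generalize hv : w * s⁻¹ = v at hv1 ⊢
  have hvP : v * P = v := by rw [← hv, mul_assoc, hc, ← mul_assoc, hwP]
  have hQv : Q * v = v := by rw [← hv, ← mul_assoc, hQw]
  have hvQ : star v * Q = star v := by
    conv_rhs => rw [← hQv, star_mul, hQs]
  have hvv : v * star v * (v * star v) = v * star v := by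
    calc v * star v * (v * star v) = v * (star v * v) * star v := by simp only [mul_assoc]
      _ = v * star v := by rw [hv1, hvP]
  have he : star (Q - v * star v) * (Q - v * star v) = Q - v * star v := by
    rw [star_sub, star_mul, star_star, hQs, sub_mul, mul_sub, mul_sub, hvv, hQ, ← mul_assoc, hQv,
      mul_assoc, hvQ]
    simp
  have ht : (star (Q - v * star v) * (Q - v * star v)).trace = 0 := by
    rw [he, Matrix.trace_sub, Matrix.trace_mul_comm, hv1, htr, sub_self]
  rw [Matrix.star_eq_conjTranspose, Matrix.trace_conjTranspose_mul_self_eq_zero_iff] at ht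
  exact (sub_eq_zero.1 ht).symm

theorem aux_local {X : Type*} [TopologicalSpace X] {n : ℕ}
    (p q : X → Matrix (Fin n) (Fin n) ℂ)
    (hpcont : Continuous p) (hpidem : ∀ x, p x * p x = p x) (hpsa : ∀ x, star (p x) = p x)
    (hqcont : Continuous q) (hqidem : ∀ x, q x * q x = q x) (hqsa : ∀ x, star (q x) = q x)
    (htr : ∀ x, (p x).trace = (q x).trace) (x₀ : X) :
    ∃ (U : Set X) (v : X → Matrix (Fin n) (Fin n) ℂ), IsOpen U ∧ x₀ ∈ U ∧ ContinuousOn v U ∧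
      ∀ x ∈ U, star (v x) * v x = p x ∧ v x * star (v x) = q x := by
  obtain ⟨c, b, hbc, hqc⟩ := aux_alg_equiv (p x₀) (q x₀) (hpidem x₀) (hqidem x₀) (htr x₀)
  let w : X → Matrix (Fin n) (Fin n) ℂ := fun x => q x * c * p x
  have hw : Continuous w := (hqcont.mul continuous_const).mul hpcont
  let a : X → Matrix (Fin n) (Fin n) ℂ := fun x => star (w x) * w x + (1 - p x)
  have ha : Continuous a := (hw.star.mul hw).add (continuous_const.sub hpcont)
  have ha0 : ∀ x, 0 ≤ a x := by
    intro x
    have : star (1 - p x) * (1 - p x) = 1 - p x := by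
      rw [star_sub, star_one, hpsa, sub_mul, mul_sub, mul_sub, hpidem]; simp
    have h2 : a x = star (w x) * w x + star (1 - p x) * (1 - p x) := by rw [this]
    rw [h2]
    exact add_nonneg (star_mul_self_nonneg _) (star_mul_self_nonneg _)
  let s : X → Matrix (Fin n) (Fin n) ℂ := fun x => CFC.sqrt (a x)
  have hs : Continuous s := by
    exact CFC.continuousOn_sqrt.comp_continuous ha ha0
  have hwp : ∀ x, w x * p x = w x := fun x => by simp only [w, mul_assoc, hpidem]
  have hqw : ∀ x, q x * w x = w x := fun x => by simp only [w, ← mul_assoc, hqidem]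
  have hpw : ∀ x, p x * star (w x) = star (w x) := fun x => by
    conv_rhs => rw [← hwp x, star_mul, hpsa]
  have hcomm : ∀ x, Commute (a x) (p x) := by
    intro x
    change a x * p x = p x * a x
    have e1 : star (w x) * w x * p x = star (w x) * w x := by rw [mul_assoc, hwp]
    have e2 : p x * (star (w x) * w x) = star (w x) * w x := by rw [← mul_assoc, hpw]
    change (star (w x) * w x + (1 - p x)) * p x = p x * (star (w x) * w x + (1 - p x))
    rw [add_mul, mul_add, e1, e2, sub_mul, mul_sub, hpidem, one_mul, mul_one]
  have hdet : Continuous fun x => (s x).det := hs.matrix_det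
  refine ⟨{x | (s x).det ≠ 0}, fun x => w x * (s x)⁻¹, ?_, ?_, ?_, ?_⟩
  · exact isOpen_ne_fun hdet continuous_const
  · have hu : IsUnit (a x₀) := by
      have : w x₀ = c := hqc
      simp only [a, this]
      exact aux_unit _ c b (hpidem x₀) (hpsa x₀) hbc
    have := (CFC.isUnit_sqrt_iff (a x₀) (ha0 x₀)).2 hu
    rw [Matrix.isUnit_iff_isUnit_det] at this
    exact this.ne_zero
  · apply hw.continuousOn.mul
    simp only [Matrix.inv_def, Ring.inverse_eq_inv']
    exact (hdet.continuousOn.inv₀ fun x hx => hx).smul hs.matrix_adjugate.continuousOn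
  · intro x hx
    refine aux_polar (p x) (q x) (w x) (s x) (hpidem x) (hqidem x) (hpsa x) (hqsa x) (htr x)
      (hwp x) (hqw x) (CFC.sqrt_mul_sqrt_self (a x) (ha0 x)) ?_ ?_ ?_
    · exact (IsSelfAdjoint.of_nonneg (CFC.sqrt_nonneg (a x))).star_eq
    · exact (hcomm x).cfcₙ_nnreal _
    · exact (Matrix.isUnit_iff_isUnit_det _).2 (isUnit_iff_ne_zero.2 hx)

theorem aux_glue {X Y : Type*} [TopologicalSpace X] [TopologicalSpace Y]
    [LocallyCompactSpace X] [T2Space X] [SecondCountableTopology X]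
    [TotallyDisconnectedSpace X] (R : X → Y → Prop)
    (h : ∀ x₀, ∃ (U : Set X) (v : X → Y), IsOpen U ∧ x₀ ∈ U ∧ ContinuousOn v U ∧
      ∀ x ∈ U, R x (v x)) : ∃ v : X → Y, Continuous v ∧ ∀ x, R x (v x) := by
  classical
  rcases isEmpty_or_nonempty X with hX | hX
  · exact ⟨fun x => (hX.false x).elim, continuous_of_const fun x => (hX.false x).elim,
      fun x => (hX.false x).elim⟩
  have h' : ∀ x₀, ∃ (U : Set X) (v : X → Y), IsClopen U ∧ x₀ ∈ U ∧ ContinuousOn v U ∧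
      ∀ x ∈ U, R x (v x) := by
    intro x₀
    obtain ⟨U, v, hU, hx, hv, hR⟩ := h x₀
    obtain ⟨W, hW, hxW, hWU⟩ :=
      (loc_compact_Haus_tot_disc_of_zero_dim (H := X)).mem_nhds_iff.1 (hU.mem_nhds hx)
    exact ⟨W, v, hW, hxW, hv.mono hWU, fun x hx => hR x (hWU hx)⟩
  choose U v hU hxU hv hR using h'
  obtain ⟨S, hS, hSU⟩ := TopologicalSpace.countable_cover_nhds
    (fun x => (hU x).isOpen.mem_nhds (hxU x))
  have hSne : S.Nonempty := by
    by_contra hne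
    rw [Set.not_nonempty_iff_eq_empty] at hne
    subst hne
    simp at hSU
    exact (Set.empty_ne_univ hSU).elim
  obtain ⟨f, rfl⟩ := hS.exists_eq_range hSne
  have hcov : ∀ x, ∃ k, x ∈ U (f k) := by
    intro x
    have : x ∈ ⋃ y ∈ Set.range f, U y := by rw [hSU]; trivial
    simpa using this
  refine ⟨fun x => v (f (Nat.find (hcov x))) x, ?_, fun x => hR _ x (Nat.find_spec (hcov x))⟩
  rw [continuous_iff_continuousAt]
  intro x₀
  have hx0 := Nat.find_spec (hcov x₀)
  have h1 : ∀ᶠ x in 𝓝 x₀, ∀ j ∈ Finset.range (Nat.find (hcov x₀)), x ∉ U (f j) := by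
    rw [Filter.eventually_all_finset]
    intro j hj
    exact (hU (f j)).compl.isOpen.mem_nhds (Nat.find_min (hcov x₀) (Finset.mem_range.1 hj))
  have h2 : ∀ᶠ x in 𝓝 x₀, x ∈ U (f (Nat.find (hcov x₀))) := (hU _).isOpen.mem_nhds hx0
  have h3 : ContinuousAt (v (f (Nat.find (hcov x₀)))) x₀ :=
    (hv _).continuousAt ((hU _).isOpen.mem_nhds hx0)
  refine h3.congr ?_
  filter_upwards [h1, h2] with x hx1 hx2
  have : Nat.find (hcov x) = Nat.find (hcov x₀) := by
    rw [Nat.find_eq_iff]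
    exact ⟨hx2, fun j hj => hx1 j (Finset.mem_range.2 hj)⟩
  rw [this]

theorem aux_main {X : Type*} [TopologicalSpace X]
    [LocallyCompactSpace X] [T2Space X] [SecondCountableTopology X]
    [TotallyDisconnectedSpace X] {n : ℕ}
    (p q : X → Matrix (Fin n) (Fin n) ℂ)
    (hpcont : Continuous p)
    (hpzero : Filter.Tendsto p (Filter.cocompact X) (nhds 0))
    (hpidem : ∀ x, p x * p x = p x) (hpsa : ∀ x, star (p x) = p x)
    (hqcont : Continuous q) (hqidem : ∀ x, q x * q x = q x) (hqsa : ∀ x, star (q x) = q x)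
    (htr : ∀ x, (p x).trace = (q x).trace) :
    ∃ v : X → Matrix (Fin n) (Fin n) ℂ,
        Continuous v ∧ Filter.Tendsto v (Filter.cocompact X) (nhds 0) ∧
        (∀ x, star (v x) * v x = p x) ∧ (∀ x, v x * star (v x) = q x) := by
  obtain ⟨v, hv, hvv⟩ := aux_glue (fun x (V : Matrix (Fin n) (Fin n) ℂ) =>
    star V * V = p x ∧ V * star V = q x)
    (aux_local p q hpcont hpidem hpsa hqcont hqidem hqsa htr)
  refine ⟨v, hv, ?_, fun x => (hvv x).1, fun x => (hvv x).2⟩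
  rw [tendsto_zero_iff_norm_tendsto_zero] at hpzero ⊢
  have h1 : ∀ x, ‖v x‖ = Real.sqrt ‖p x‖ := by
    intro x
    rw [← (hvv x).1, CStarRing.norm_star_mul_self, Real.sqrt_mul_self (norm_nonneg _)]
  simp only [h1]
  simpa using hpzero.sqrt

end Helpers

/-- Two projections `p, q ∈ C₀(X, Mₙ(ℂ))` over a td-lcsc space `X` are
Murray–von Neumann equivalent (there is `v ∈ C₀(X, Mₙ(ℂ))` with `v* v = p` and
`v v* = q`) if and only if they have equal pointwise traces. -/
theorem projections_MvNEquivalent_iff_trace_eq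
    {X : Type*} [TopologicalSpace X]
    [LocallyCompactSpace X] [T2Space X] [SecondCountableTopology X]
    [TotallyDisconnectedSpace X]
    (n : ℕ) (hn : 1 ≤ n)
    (p q : X → Matrix (Fin n) (Fin n) ℂ)
    (hpcont : Continuous p)
    (hpzero : Filter.Tendsto p (Filter.cocompact X) (nhds 0))
    (hpidem : ∀ x, p x * p x = p x)
    (hpsa : ∀ x, star (p x) = p x)
    (hqcont : Continuous q)
    (hqzero : Filter.Tendsto q (Filter.cocompact X) (nhds 0))
    (hqidem : ∀ x, q x * q x = q x)
    (hqsa : ∀ x, star (q x) = q x) :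
    (∃ v : X → Matrix (Fin n) (Fin n) ℂ,
        Continuous v ∧ Filter.Tendsto v (Filter.cocompact X) (nhds 0) ∧
        (∀ x, star (v x) * v x = p x) ∧ (∀ x, v x * star (v x) = q x)) ↔
      ∀ x, (p x).trace = (q x).trace := by
  constructor
  · rintro ⟨v, -, -, h1, h2⟩ x
    rw [← h1, ← h2, Matrix.trace_mul_comm]
  · intro htr
    exact aux_main p q hpcont hpzero hpidem hpsa hqcont hqidem hqsa htr
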